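/- Let ε22 = X² + 3X + 3, ε23 = X² + 3, ε6 = X⁶ + 3X⁵ + 9X⁴ + 15X³ + 27X² + 27X + 27, and ε12 = X¹² + 6X¹¹ + 18X¹⁰ + 39X⁹ + 63X⁸ + 81X⁷ + 117X⁶ + 243X⁵ + 567X⁴ + 1053X³ + 1458X² + 1458X + 729. Then for every n ≥ 3 (with no coprimality restriction on n) and every finite field K with 3^n elements, the number of a ∈ K with T_1(a) = 0, T_2(a) = 0 and T_3(a) = 0 equals 3^{n−3} − (1/27)·(2ρ_n(ε22) + ρ_n(ε23) + 2ρ_n(ε6) + 2ρ_n(ε12)), as complex numbers. -/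

import Mathlib

open Polynomial

/-- For a finite field `K` with `3^n` elements, the `k`-th trace function
`T_k(a) = Σ_S ∏_{i ∈ S} a^(3^i)`, the sum over all `k`-element subsets `S` of `{0,…,n-1}`. -/
noncomputable def traceFn (q n k : ℕ) {K : Type*} [CommRing K] (a : K) : K :=
  ∑ S ∈ Finset.powersetCard k (Finset.range n), ∏ i ∈ S, a ^ (q ^ i)

/-- `ρ_n(γ)`: the sum of the `n`-th powers of the complex roots of `γ ∈ ℤ[X]`,
counted with multiplicity. -/
noncomputable def rho (n : ℕ) (γ : Polynomial ℤ) : ℂ :=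
  ((γ.map (Int.castRingHom ℂ)).roots.map (· ^ n)).sum

noncomputable def e22 : Polynomial ℤ := X ^ 2 + 3 * X + 3
noncomputable def e23 : Polynomial ℤ := X ^ 2 + 3
noncomputable def e6 : Polynomial ℤ :=
  X ^ 6 + 3 * X ^ 5 + 9 * X ^ 4 + 15 * X ^ 3 + 27 * X ^ 2 + 27 * X + 27
noncomputable def e12 : Polynomial ℤ :=
  X ^ 12 + 6 * X ^ 11 + 18 * X ^ 10 + 39 * X ^ 9 + 63 * X ^ 8 + 81 * X ^ 7 + 117 * X ^ 6
    + 243 * X ^ 5 + 567 * X ^ 4 + 1053 * X ^ 3 + 1458 * X ^ 2 + 1458 * X + 729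

/-!
The characteristic polynomial of `a ∈ K` over `𝔽₃` has reversal `∑ (-1) ^ k * T_k(a) * t ^ k`, so
`T₁`, `T₂`, `T₃` vanish at `a` exactly when this reversal is `1` in the group of principal units of
`𝔽₃[t]/(t⁴)`, which is isomorphic to `ℤ/9 × ℤ/3`. Orthogonality of the 27 characters of this group
expresses the count through character sums over `K`. Grouping the elements of `K` by their
characteristic polynomials turns such a sum into `∑ Λ(f) χ(f)` over the monic `f` of degree `n`,
which is the coefficient of `T ^ (n - 1)` in the logarithmic derivative of
`L(T, χ) = ∑ χ(f) T ^ deg f`.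

For nontrivial `χ` the monic polynomials of each degree `≥ 3` are equidistributed among the 27
classes, so `L(T, χ)` is a quadratic polynomial and, by Newton's identities, the character sum is
minus the `n`-th power sum of the roots of its reversal. The product of the 26 reversed quadratics
is `X ^ 10 * e22 ^ 2 * e23 * e6 ^ 2 * e12 ^ 2`.
-/

section VonMangoldt

open UniqueFactorizationMonoid
open Finset.HasAntidiagonal (antidiagonal mem_antidiagonal)

variable {F : Type*} [Field F]

open Classical in
/-- The von Mangoldt function of polynomials: `P ^ j ↦ deg P` for `P` prime and `0 < j`, and `0`
elsewhere. -/
noncomputable def polynomialVonMangoldt (f : F[X]) : ℕ :=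
  if IsPrimePow f then (radical f).natDegree else 0

theorem polynomialVonMangoldt_pow {P : F[X]} (hP : Irreducible P) {j : ℕ} (hj : j ≠ 0) :
    polynomialVonMangoldt (P ^ j) = P.natDegree := by
  classical
  rw [polynomialVonMangoldt, if_pos (hP.prime.isPrimePow.pow hj),
    radical_pow_of_prime hP.prime hj, natDegree_eq_of_degree_eq degree_normalize]

theorem eq_of_monic_of_irreducible_of_dvd_pow {P Q : F[X]} (hPm : P.Monic) (hP : Irreducible P)
    (hQm : Q.Monic) (hQ : Irreducible Q) {j : ℕ} (h : P ∣ Q ^ j) : P = Q :=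
  eq_of_monic_of_associated hPm hQm
    (hP.associated_of_dvd hQ (hP.prime.dvd_of_dvd_pow h))

theorem exists_monic_irreducible_pow_eq {f : F[X]} (hf : f.Monic) (hpp : IsPrimePow f) :
    ∃ P : F[X], ∃ j : ℕ, P.Monic ∧ Irreducible P ∧ j ≠ 0 ∧ P ^ j = f := by
  obtain ⟨Q, j, hQ, hj, rfl⟩ := hpp
  classical
  have hP : (normalize Q).Monic := monic_normalize hQ.ne_zero
  exact ⟨normalize Q, j, hP, (normalize_associated Q).symm.irreducible hQ.irreducible, hj.ne',
    eq_of_monic_of_associated (hP.pow j) hf ((normalize_associated Q).pow_pow)⟩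

open Classical in
theorem monic_of_mem_normalizedFactors {f P : F[X]} (hP : P ∈ normalizedFactors f) : P.Monic := by
  rw [← normalize_normalized_factor P hP]
  exact monic_normalize (irreducible_of_normalized_factor P hP).ne_zero

open Classical in
theorem pow_dvd_iff_le_count_normalizedFactors {f P : F[X]} (hf : f ≠ 0)
    (hP : P ∈ normalizedFactors f) (j : ℕ) : P ^ j ∣ f ↔ j ≤ (normalizedFactors f).count P := by
  have hirr := irreducible_of_normalized_factor P hP
  rw [dvd_iff_normalizedFactors_le_normalizedFactors (pow_ne_zero _ hirr.ne_zero) hf,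
    normalizedFactors_pow, normalizedFactors_irreducible hirr, normalize_normalized_factor P hP,
    Multiset.nsmul_singleton, Multiset.le_count_iff_replicate_le]

open Classical in
theorem sum_count_mul_natDegree_normalizedFactors {f : F[X]} (hf : f ≠ 0) :
    ∑ P ∈ (normalizedFactors f).toFinset, (normalizedFactors f).count P * P.natDegree =
      f.natDegree := by
  rw [← natDegree_eq_of_degree_eq (degree_normalize (p := f)), ← prod_normalizedFactors_eq hf,
    natDegree_multiset_prod _ (zero_notMem_normalizedFactors f), Finset.sum_multiset_map_count]
  simp only [smul_eq_mul]

theorem injective_mul_X_add_C {R : Type*} [Ring R] :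
    Function.Injective fun p : R × R[X] => p.2 * X + C p.1 := by
  rintro ⟨c, f⟩ ⟨d, g⟩ h
  have hconst : c = d := by simpa using congrArg (coeff · 0) h
  subst hconst
  exact congrArg (Prod.mk c) (isRegular_X.right (add_right_cancel h))

theorem sum_Icc_polynomialVonMangoldt_pow {P : F[X]} (hP : Irreducible P) (m : ℕ) :
    ∑ j ∈ Finset.Icc 1 m, polynomialVonMangoldt (P ^ j) = m * P.natDegree := by
  rw [Finset.sum_congr rfl fun j hj => polynomialVonMangoldt_pow hP
    (Nat.one_le_iff_ne_zero.mp (Finset.mem_Icc.mp hj).1), Finset.sum_const, Nat.card_Icc,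
    Nat.add_sub_cancel, smul_eq_mul]

/-- The monic polynomials of degree `n` over a finite field, built by adding one constant
coefficient at a time. -/
noncomputable def monicsOfDegree (F : Type*) [Field F] [Fintype F] : ℕ → Finset F[X]
  | 0 => {1}
  | n + 1 => (Finset.univ ×ˢ monicsOfDegree F n).map ⟨_, injective_mul_X_add_C⟩

variable [Fintype F]

theorem mem_monicsOfDegree {n : ℕ} {f : F[X]} :
    f ∈ monicsOfDegree F n ↔ f.Monic ∧ f.natDegree = n := by
  induction n generalizing f with
  | zero =>
    rw [monicsOfDegree, Finset.mem_singleton]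
    exact ⟨by rintro rfl; simp, fun ⟨hf, h0⟩ => hf.natDegree_eq_zero.mp h0⟩
  | succ n ih =>
    simp only [monicsOfDegree, Finset.mem_map, Function.Embedding.coeFn_mk,
      Finset.mem_product, Finset.mem_univ, true_and, Prod.exists, ih]
    constructor
    · rintro ⟨c, g, ⟨hg, rfl⟩, rfl⟩
      have hdeg : (C c).degree < (g * X).degree := by
        rw [degree_mul_X, degree_eq_natDegree hg.ne_zero]
        exact degree_C_le.trans_lt (by exact_mod_cast Nat.succ_pos _)
      refine ⟨(hg.mul monic_X).add_of_left hdeg, ?_⟩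
      rw [natDegree_add_C, natDegree_mul_X hg.ne_zero]
    · rintro ⟨hf, hn⟩
      have hdeg : f.divX.natDegree = n := by
        rw [natDegree_divX_eq_natDegree_tsub_one, hn, Nat.add_sub_cancel]
      refine ⟨f.coeff 0, f.divX, ⟨?_, hdeg⟩, divX_mul_X_add f⟩
      rw [Monic, leadingCoeff, hdeg, coeff_divX, ← hn, hf.coeff_natDegree]

theorem sum_monicsOfDegree_zero {M : Type*} [AddCommMonoid M] (φ : F[X] → M) :
    ∑ f ∈ monicsOfDegree F 0, φ f = φ 1 :=
  Finset.sum_singleton φ 1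

theorem sum_monicsOfDegree_succ {M : Type*} [AddCommMonoid M] (φ : F[X] → M) (n : ℕ) :
    ∑ f ∈ monicsOfDegree F (n + 1), φ f =
      ∑ c : F, ∑ f ∈ monicsOfDegree F n, φ (f * X + C c) := by
  rw [monicsOfDegree, Finset.sum_map, Finset.sum_product]
  rfl

open Classical in
/-- The finite set of monic divisors of a nonzero polynomial. -/
noncomputable def monicDivisors (f : F[X]) : Finset F[X] :=
  {h ∈ (Finset.range (f.natDegree + 1)).biUnion (monicsOfDegree F) | h ∣ f}

theorem mem_monicDivisors {f h : F[X]} (hf : f ≠ 0) : h ∈ monicDivisors f ↔ h.Monic ∧ h ∣ f := by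
  simp only [monicDivisors, Finset.mem_filter, Finset.mem_biUnion, Finset.mem_range,
    mem_monicsOfDegree, Nat.lt_succ_iff]
  exact ⟨fun ⟨⟨_, _, hm, _⟩, hd⟩ => ⟨hm, hd⟩,
    fun ⟨hm, hd⟩ => ⟨⟨_, natDegree_le_of_dvd hd hf, hm, rfl⟩, hd⟩⟩

theorem sum_monicDivisors_polynomialVonMangoldt {f : F[X]} (hf : f ≠ 0) :
    ∑ h ∈ monicDivisors f, polynomialVonMangoldt h = f.natDegree := by
  classical
  have hcount : ∀ P ∈ (normalizedFactors f).toFinset,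
      (normalizedFactors f).count P * P.natDegree =
        ∑ j ∈ Finset.Icc 1 ((normalizedFactors f).count P), polynomialVonMangoldt (P ^ j) :=
    fun P hP => (sum_Icc_polynomialVonMangoldt_pow
      (irreducible_of_normalized_factor P (Multiset.mem_toFinset.mp hP)) _).symm
  rw [← sum_count_mul_natDegree_normalizedFactors hf, Finset.sum_congr rfl hcount,
    Finset.sum_sigma']
  symm
  refine Finset.sum_bij_ne_zero (fun p _ _ => p.1 ^ p.2) ?_ ?_ ?_ fun _ _ _ => rfl
  · rintro ⟨P, j⟩ h -
    simp only [Finset.mem_sigma, Multiset.mem_toFinset, Finset.mem_Icc] at h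
    exact (mem_monicDivisors hf).mpr ⟨(monic_of_mem_normalizedFactors h.1).pow j,
      (pow_dvd_iff_le_count_normalizedFactors hf h.1 j).mpr h.2.2⟩
  · rintro ⟨P, i⟩ hPi - ⟨Q, j⟩ hQj - (h : P ^ i = Q ^ j)
    simp only [Finset.mem_sigma, Multiset.mem_toFinset, Finset.mem_Icc] at hPi hQj
    have hP := irreducible_of_normalized_factor P hPi.1
    obtain rfl : P = Q := eq_of_monic_of_irreducible_of_dvd_pow
      (monic_of_mem_normalizedFactors hPi.1) hP (monic_of_mem_normalizedFactors hQj.1)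
      (irreducible_of_normalized_factor Q hQj.1) (h ▸ dvd_pow_self P (by lia))
    obtain rfl : i = j := pow_injective_of_not_isUnit hP.not_isUnit hP.ne_zero h
    rfl
  · intro h hh hne
    obtain ⟨hmonic, hdvd⟩ := (mem_monicDivisors hf).mp hh
    obtain ⟨P, j, hPm, hP, hj, rfl⟩ := exists_monic_irreducible_pow_eq hmonic
      (by_contra fun hn => hne (if_neg hn))
    have hmem : P ∈ normalizedFactors f := (mem_normalizedFactors_iff' hf).mpr
      ⟨hP, hPm.normalize_eq_self, (dvd_pow_self P hj).trans hdvd⟩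
    exact ⟨⟨P, j⟩, Finset.mem_sigma.mpr ⟨Multiset.mem_toFinset.mpr hmem, Finset.mem_Icc.mpr
      ⟨Nat.one_le_iff_ne_zero.mpr hj,
        (pow_dvd_iff_le_count_normalizedFactors hf hmem j).mp hdvd⟩⟩, hne, rfl⟩

theorem sum_antidiagonal_monicsOfDegree {M : Type*} [AddCommMonoid M] (Φ : F[X] → F[X] → M)
    (n : ℕ) :
    ∑ p ∈ antidiagonal n, ∑ h ∈ monicsOfDegree F p.1, ∑ g ∈ monicsOfDegree F p.2,
        Φ h (h * g) =
      ∑ f ∈ monicsOfDegree F n, ∑ h ∈ monicDivisors f, Φ h f := by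
  simp_rw [← Finset.sum_product', Finset.sum_sigma']
  refine Finset.sum_bij' (fun x _ => ⟨x.2.1 * x.2.2, x.2.1⟩)
    (fun y _ => ⟨(y.2.natDegree, (y.1 / y.2).natDegree), (y.2, y.1 / y.2)⟩) ?_ ?_ ?_ ?_ ?_
  · rintro ⟨⟨k, l⟩, h, g⟩ hx
    simp only [Finset.mem_sigma, mem_antidiagonal, Finset.mem_product,
      mem_monicsOfDegree] at hx ⊢
    obtain ⟨rfl, ⟨hh, rfl⟩, hg, rfl⟩ := hx
    exact ⟨⟨hh.mul hg, hh.natDegree_mul hg⟩,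
      (mem_monicDivisors (hh.mul hg).ne_zero).mpr ⟨hh, dvd_mul_right h g⟩⟩
  · rintro ⟨f, h⟩ hx
    simp only [Finset.mem_sigma, mem_monicsOfDegree] at hx
    obtain ⟨⟨hf, rfl⟩, hx⟩ := hx
    obtain ⟨hh, g, rfl⟩ := (mem_monicDivisors hf.ne_zero).mp hx
    have hg := hh.of_mul_monic_left hf
    simp only [mul_div_cancel_left₀ g hh.ne_zero, Finset.mem_sigma, mem_antidiagonal,
      Finset.mem_product, mem_monicsOfDegree, hh.natDegree_mul hg, hh, hg, and_self]
  · rintro ⟨⟨k, l⟩, h, g⟩ hx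
    simp only [Finset.mem_sigma, Finset.mem_product, mem_monicsOfDegree] at hx
    obtain ⟨-, ⟨hh, rfl⟩, -, rfl⟩ := hx
    simp only [mul_div_cancel_left₀ g hh.ne_zero]
  · rintro ⟨f, h⟩ hx
    simp only [Finset.mem_sigma, mem_monicsOfDegree] at hx
    obtain ⟨hh, g, rfl⟩ := (mem_monicDivisors hx.1.1.ne_zero).mp hx.2
    simp only [mul_div_cancel_left₀ g hh.ne_zero]
  · exact fun _ _ => rfl

theorem natCast_mul_sum_monicsOfDegree {R : Type*} [CommSemiring R] {χ : F[X] → R}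
    (hχ : ∀ f g : F[X], f.Monic → g.Monic → χ (f * g) = χ f * χ g) (n : ℕ) :
    n * ∑ f ∈ monicsOfDegree F n, χ f =
      ∑ p ∈ antidiagonal n, (∑ h ∈ monicsOfDegree F p.1, polynomialVonMangoldt h * χ h) *
        ∑ g ∈ monicsOfDegree F p.2, χ g := by
  symm
  calc
    _ = ∑ p ∈ antidiagonal n, ∑ h ∈ monicsOfDegree F p.1, ∑ g ∈ monicsOfDegree F p.2,
          polynomialVonMangoldt h * χ (h * g) := by
      refine Finset.sum_congr rfl fun p _ => ?_
      rw [Finset.sum_mul_sum]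
      refine Finset.sum_congr rfl fun h hh => Finset.sum_congr rfl fun g hg => ?_
      rw [hχ h g (mem_monicsOfDegree.mp hh).1 (mem_monicsOfDegree.mp hg).1, mul_assoc]
    _ = ∑ f ∈ monicsOfDegree F n, ∑ h ∈ monicDivisors f, polynomialVonMangoldt h * χ f :=
      sum_antidiagonal_monicsOfDegree (fun h f => polynomialVonMangoldt h * χ f) n
    _ = n * ∑ f ∈ monicsOfDegree F n, χ f := by
      rw [Finset.mul_sum]
      refine Finset.sum_congr rfl fun f hf => ?_
      obtain ⟨hmonic, rfl⟩ := mem_monicsOfDegree.mp hf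
      rw [← Finset.sum_mul, ← Nat.cast_sum, sum_monicDivisors_polynomialVonMangoldt hmonic.ne_zero]

end VonMangoldt

section FieldCharpoly

variable (F : Type*) [Field F] {K : Type*} [Field K] [Algebra F K]

theorem card_minpoly_eq [Finite F] [Finite K] {P : F[X]} (hPm : P.Monic)
    (hP : Irreducible P) (hdvd : P.natDegree ∣ Module.finrank F K) :
    Nat.card {a : K // minpoly F a = P} = P.natDegree := by
  have hsplits : (P.map (algebraMap F K)).Splits := by
    rw [hP.natDegree_dvd_iff_dvd_X_pow_card_pow_sub_X, ← Module.natCard_eq_pow_finrank (V := K)]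
      at hdvd
    have hdvd' := Polynomial.map_dvd (algebraMap F K) hdvd
    rw [Polynomial.map_sub, Polynomial.map_pow, map_X] at hdvd'
    exact (splits_X_pow_nat_card_sub_X (K := K)).of_dvd
      (FiniteField.X_pow_card_sub_X_ne_zero K Finite.one_lt_card) hdvd'
  rw [← card_rootSet_eq_natDegree (PerfectField.separable_of_irreducible hP) hsplits,
    ← Nat.card_eq_fintype_card]
  refine Nat.card_congr (Equiv.subtypeEquivRight fun a => ?_)
  rw [mem_rootSet_of_ne hP.ne_zero]
  exact ⟨by rintro rfl; exact minpoly.aeval F a,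
    fun h => (minpoly.eq_of_irreducible_of_monic hP h hPm).symm⟩

/-- The characteristic polynomial over `F` of an element `a` of a finite extension `K`, encoded as
the power of the minimal polynomial of `a` that has degree `[K : F]`. -/
noncomputable def fieldCharpoly (a : K) : F[X] :=
  minpoly F a ^ (Module.finrank F K / (minpoly F a).natDegree)

variable [Fintype F]

theorem frobeniusAlgHom_pow_apply (a : K) (i : ℕ) :
    (FiniteField.frobeniusAlgHom F K ^ i) a = a ^ Fintype.card F ^ i := by
  rw [AlgHom.coe_pow, FiniteField.coe_frobeniusAlgHom, pow_iterate]

theorem aeval_minpoly_pow_card_pow (a : K) (i : ℕ) :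
    aeval (a ^ Fintype.card F ^ i) (minpoly F a) = 0 := by
  rw [← frobeniusAlgHom_pow_apply, aeval_algHom_apply, minpoly.aeval, map_zero]

variable [Finite K]

theorem natDegree_minpoly_dvd_iff (a : K) (m : ℕ) :
    (minpoly F a).natDegree ∣ m ↔ a ^ Fintype.card F ^ m = a := by
  have hirr := minpoly.irreducible (Algebra.IsIntegral.isIntegral (R := F) a)
  rw [hirr.natDegree_dvd_iff_dvd_X_pow_card_pow_sub_X, minpoly.dvd_iff]
  simp [sub_eq_zero]

theorem injOn_pow_card_pow_minpoly (a : K) :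
    Set.InjOn (fun i => a ^ Fintype.card F ^ i) (Set.Iio (minpoly F a).natDegree) := by
  have hne : ∀ i j, i < j → j < (minpoly F a).natDegree →
      a ^ Fintype.card F ^ i ≠ a ^ Fintype.card F ^ j := by
    intro i j hij hj h
    have hfix : a ^ Fintype.card F ^ (j - i) = a := by
      have hinj : Function.Injective (FiniteField.frobeniusAlgHom F K ^ i) :=
        (FiniteField.frobeniusAlgHom F K ^ i).injective
      apply hinj
      rw [frobeniusAlgHom_pow_apply, frobeniusAlgHom_pow_apply, h, ← pow_mul, ← pow_add,
        Nat.sub_add_cancel hij.le]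
    have hle := Nat.le_of_dvd (by lia) ((natDegree_minpoly_dvd_iff F a _).mpr hfix)
    lia
  intro i hi j hj h
  by_contra hij
  rcases lt_or_gt_of_ne hij with hlt | hlt
  · exact hne i j hlt hj h
  · exact hne j i hlt hi h.symm

theorem map_minpoly_eq_prod (a : K) :
    (minpoly F a).map (algebraMap F K) =
      ∏ i ∈ Finset.range (minpoly F a).natDegree, (X - C (a ^ Fintype.card F ^ i)) := by
  have hmonic : (∏ i ∈ Finset.range (minpoly F a).natDegree,
      (X - C (a ^ Fintype.card F ^ i))).Monic := monic_prod_X_sub_C _ _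
  have hint : IsIntegral F a := Algebra.IsIntegral.isIntegral a
  refine eq_of_monic_of_dvd_of_natDegree_le hmonic ((minpoly.monic hint).map _) ?_ ?_
  · refine Finset.prod_dvd_of_coprime (fun i hi j hj hij => ?_) fun i _ => ?_
    · rw [Finset.coe_range] at hi hj
      exact isCoprime_X_sub_C_of_isUnit_sub
        (sub_ne_zero.mpr ((injOn_pow_card_pow_minpoly F a).ne hi hj hij)).isUnit
    · rw [dvd_iff_isRoot, IsRoot, eval_map_algebraMap, aeval_minpoly_pow_card_pow]
  · rw [natDegree_map, natDegree_finsetProd_X_sub_C_eq_card, Finset.card_range]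

theorem prod_range_mul_eq_pow_of_periodic {M : Type*} [CommMonoid M] {φ : ℕ → M} {d : ℕ}
    (hφ : Function.Periodic φ d) (j : ℕ) :
    ∏ i ∈ Finset.range (d * j), φ i = (∏ i ∈ Finset.range d, φ i) ^ j := by
  induction j with
  | zero => simp
  | succ j ih =>
    rw [mul_add, mul_one, Finset.prod_range_add, ih, pow_succ]
    congr 1
    refine Finset.prod_congr rfl fun i _ => ?_
    rw [add_comm, mul_comm, ← smul_eq_mul]
    exact hφ.nsmul j i

theorem map_fieldCharpoly_eq_prod (a : K) :
    (fieldCharpoly F a).map (algebraMap F K) =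
      ∏ i ∈ Finset.range (Module.finrank F K), (X - C (a ^ Fintype.card F ^ i)) := by
  have hperiod : Function.Periodic (fun i => X - C (a ^ Fintype.card F ^ i))
      (minpoly F a).natDegree := fun i => by
    simp only [add_comm i, pow_add, pow_mul, (natDegree_minpoly_dvd_iff F a _).mp dvd_rfl]
  rw [fieldCharpoly, Polynomial.map_pow, map_minpoly_eq_prod,
    ← prod_range_mul_eq_pow_of_periodic hperiod,
    Nat.mul_div_cancel' (minpoly.degree_dvd (Algebra.IsIntegral.isIntegral a))]

theorem fieldCharpoly_mem_monicsOfDegree (a : K) :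
    fieldCharpoly F a ∈ monicsOfDegree F (Module.finrank F K) := by
  rw [mem_monicsOfDegree, fieldCharpoly, natDegree_pow,
    Nat.div_mul_cancel (minpoly.degree_dvd (Algebra.IsIntegral.isIntegral a))]
  exact ⟨(minpoly.monic (Algebra.IsIntegral.isIntegral a)).pow _, rfl⟩

theorem algebraMap_coeff_reverse_fieldCharpoly (a : K) {k : ℕ} (hk : k ≤ Module.finrank F K) :
    algebraMap F K ((fieldCharpoly F a).reverse.coeff k) =
      (-1) ^ k * traceFn (Fintype.card F) (Module.finrank F K) k a := by
  have hdeg := (mem_monicsOfDegree.mp (fieldCharpoly_mem_monicsOfDegree F a)).2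
  have hcoeff := Multiset.prod_X_sub_C_coeff
    ((Finset.range (Module.finrank F K)).val.map (fun i => a ^ Fintype.card F ^ i))
    (k := Module.finrank F K - k) (by simp)
  rw [coeff_reverse, hdeg, revAt_le hk, ← coeff_map, map_fieldCharpoly_eq_prod]
  rw [Multiset.map_map, Finset.esymm_map_val, Multiset.card_map, Finset.card_val,
    Finset.card_range, Nat.sub_sub_self hk] at hcoeff
  exact hcoeff

theorem card_fieldCharpoly_eq {f : F[X]} (hf : f ∈ monicsOfDegree F (Module.finrank F K)) :
    Nat.card {a : K // fieldCharpoly F a = f} = polynomialVonMangoldt f := by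
  have hirr : ∀ a : K, Irreducible (minpoly F a) := fun a =>
    minpoly.irreducible (Algebra.IsIntegral.isIntegral a)
  have hexp : ∀ a : K, Module.finrank F K / (minpoly F a).natDegree ≠ 0 := fun a =>
    (Nat.div_pos (Nat.le_of_dvd Module.finrank_pos
      (minpoly.degree_dvd (Algebra.IsIntegral.isIntegral a))) (hirr a).natDegree_pos).ne'
  rw [mem_monicsOfDegree] at hf
  obtain ⟨hfm, hfd⟩ := hf
  by_cases hpp : IsPrimePow f
  · obtain ⟨P, j, hPm, hP, hj, rfl⟩ := exists_monic_irreducible_pow_eq hfm hpp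
    rw [natDegree_pow] at hfd
    rw [polynomialVonMangoldt_pow hP hj, ← card_minpoly_eq F hPm hP ⟨j, by rw [← hfd, mul_comm]⟩]
    refine Nat.card_congr (Equiv.subtypeEquivRight fun a => ⟨fun h => ?_, fun h => ?_⟩)
    · refine eq_of_monic_of_irreducible_of_dvd_pow (minpoly.monic (Algebra.IsIntegral.isIntegral a))
        (hirr a) hPm hP (j := j) ?_
      rw [← h]
      exact dvd_pow_self _ (hexp a)
    · rw [fieldCharpoly, h, ← hfd, Nat.mul_div_cancel _ hP.natDegree_pos]
  · rw [polynomialVonMangoldt, if_neg hpp, Nat.card_eq_zero]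
    refine Or.inl ⟨fun ⟨a, ha⟩ => hpp ?_⟩
    rw [← ha, fieldCharpoly]
    exact (hirr a).prime.isPrimePow.pow (hexp a)

theorem sum_fieldCharpoly {R : Type*} [CommSemiring R] [Fintype K] (χ : F[X] → R) :
    ∑ a : K, χ (fieldCharpoly F a) =
      ∑ f ∈ monicsOfDegree F (Module.finrank F K), polynomialVonMangoldt f * χ f := by
  classical
  rw [← Finset.sum_fiberwise_of_maps_to fun a _ => fieldCharpoly_mem_monicsOfDegree F a]
  refine Finset.sum_congr rfl fun f hf => ?_
  rw [Finset.sum_congr rfl fun a ha => congrArg χ (Finset.mem_filter.mp ha).2, Finset.sum_const,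
    nsmul_eq_mul, ← card_fieldCharpoly_eq F hf, Nat.card_eq_fintype_card, Fintype.card_subtype]

end FieldCharpoly

section Reverse

variable {R : Type*} [Semiring R]

theorem reverse_mul_X_add_C {f : R[X]} (hf : f ≠ 0) (c : R) :
    (f * X + C c).reverse = f.reverse + C c * X ^ (f.natDegree + 1) := by
  have : Nontrivial R := nontrivial_iff.mp ⟨f, 0, hf⟩
  rw [reverse_add_C, reverse_mul_X, natDegree_mul_X hf]

variable [Nontrivial R]

-- The shape `(⋯(1 * X + C a) * X + ⋯) * X + C c` is the one that iterating
-- `sum_monicsOfDegree_succ` produces.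
theorem reverse_linear (a : R) :
    (1 * X + C a).reverse = 1 + C a * X := by
  rw [reverse_mul_X_add_C one_ne_zero, natDegree_one, ← C_1, reverse_C, zero_add, pow_one]

theorem reverse_quadratic (a b : R) :
    ((1 * X + C a) * X + C b).reverse = 1 + C a * X + C b * X ^ 2 := by
  rw [reverse_mul_X_add_C (by rw [one_mul]; exact X_add_C_ne_zero a), reverse_linear, one_mul,
    natDegree_X_add_C]

theorem reverse_cubic (a b c : R) :
    (((1 * X + C a) * X + C b) * X + C c).reverse =
      1 + C a * X + C b * X ^ 2 + C c * X ^ 3 := by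
  have hdeg : ((1 * X + C a) * X + C b).natDegree = 2 := by compute_degree!
  rw [reverse_mul_X_add_C (ne_zero_of_natDegree_gt (hdeg ▸ one_lt_two)), reverse_quadratic, hdeg]

theorem reverse_X_sub_C {R : Type*} [Ring R] [Nontrivial R] (a : R) :
    (X - C a).reverse = 1 - C a * X := by
  have h := reverse_linear (-a)
  rwa [one_mul, C_neg, ← sub_eq_add_neg, neg_mul, ← sub_eq_add_neg] at h

theorem derivative_reverse_X_sub_C {R : Type*} [CommRing R] [Nontrivial R] (a : R) :
    PowerSeries.derivative R ((X - C a).reverse : PowerSeries R) =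
      (X - C a).reverse * PowerSeries.mk fun k => -a ^ (k + 1) := by
  ext k
  rw [reverse_X_sub_C, coe_sub, coe_one, coe_mul, coe_C, coe_X, sub_mul, one_mul, mul_assoc]
  rcases k with - | k
  · simp
  · simp [PowerSeries.coeff_succ_X_mul, pow_succ']

end Reverse

section RootPowerSum

variable {R : Type*} [CommRing R] [IsDomain R]

/-- The sum of the `n`-th powers of the roots of a polynomial in its coefficient ring, counted with
multiplicity. -/
noncomputable def rootPowerSum (n : ℕ) (p : R[X]) : R :=
  (p.roots.map (· ^ n)).sum

theorem rootPowerSum_mul (n : ℕ) {p q : R[X]} (hpq : p * q ≠ 0) :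
    rootPowerSum n (p * q) = rootPowerSum n p + rootPowerSum n q := by
  simp only [rootPowerSum, roots_mul hpq, Multiset.map_add, Multiset.sum_add]

theorem rootPowerSum_pow (n : ℕ) (p : R[X]) (m : ℕ) :
    rootPowerSum n (p ^ m) = m * rootPowerSum n p := by
  rw [rootPowerSum, roots_pow, Multiset.map_nsmul, Multiset.sum_nsmul, nsmul_eq_mul, rootPowerSum]

theorem rootPowerSum_prod (n : ℕ) {ι : Type*} (s : Finset ι) {p : ι → R[X]}
    (hp : ∀ i ∈ s, p i ≠ 0) :
    rootPowerSum n (∏ i ∈ s, p i) = ∑ i ∈ s, rootPowerSum n (p i) := by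
  rw [rootPowerSum, roots_prod p s (Finset.prod_ne_zero_iff.mpr hp), Multiset.map_bind,
    Multiset.sum_bind]
  rfl

theorem rootPowerSum_X {n : ℕ} (hn : n ≠ 0) : rootPowerSum n (X : R[X]) = 0 := by
  simp [rootPowerSum, hn]

theorem derivative_reverse_eq_mul_rootPowerSum {p : R[X]} (hp : p.Monic) (hs : p.Splits) :
    PowerSeries.derivative R (p.reverse : PowerSeries R) =
      p.reverse * PowerSeries.mk fun k => -rootPowerSum (k + 1) p := by
  suffices h : ∀ s : Multiset R, PowerSeries.derivative R
      (((s.map (X - C ·)).prod.reverse : R[X]) : PowerSeries R) =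
        (s.map (X - C ·)).prod.reverse *
          PowerSeries.mk fun k => -(s.map (· ^ (k + 1))).sum by
    have := h p.roots
    rwa [← hs.eq_prod_roots_of_monic hp] at this
  intro s
  induction s using Multiset.induction with
  | empty =>
    ext k
    rw [Multiset.map_zero, Multiset.prod_zero, ← C_1, reverse_C]
    simp
  | cons a s ih =>
    have hadd : (PowerSeries.mk fun k => -((a ::ₘ s).map (· ^ (k + 1))).sum) =
        (PowerSeries.mk fun k => -a ^ (k + 1)) +
          PowerSeries.mk fun k => -(s.map (· ^ (k + 1))).sum := by
      ext k
      simp [add_comm]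
    rw [hadd, Multiset.map_cons, Multiset.prod_cons, reverse_mul_of_domain, coe_mul,
      Derivation.leibniz, ih, derivative_reverse_X_sub_C, smul_eq_mul, smul_eq_mul]
    ring

end RootPowerSum

section LSeries

variable {F : Type*} [Field F] [Fintype F] {R : Type*} [CommRing R]

/-- The L-series `∑ χ(f) T ^ deg f`, over all monic polynomials `f`, of a function `χ` on
polynomials. -/
noncomputable def monicLSeries (χ : F[X] → R) : PowerSeries R :=
  PowerSeries.mk fun n => ∑ f ∈ monicsOfDegree F n, χ f

theorem derivative_monicLSeries {χ : F[X] → R}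
    (hχ : ∀ f g : F[X], f.Monic → g.Monic → χ (f * g) = χ f * χ g) :
    PowerSeries.derivative R (monicLSeries χ) =
      monicLSeries χ * PowerSeries.mk fun n =>
        ∑ f ∈ monicsOfDegree F (n + 1), polynomialVonMangoldt f * χ f := by
  ext n
  have hone : ∑ f ∈ monicsOfDegree F 0, polynomialVonMangoldt f * χ f = 0 := by
    rw [sum_monicsOfDegree_zero, polynomialVonMangoldt, if_neg not_isPrimePow_one, Nat.cast_zero,
      zero_mul]
  have h := natCast_mul_sum_monicsOfDegree hχ (n + 1)
  rw [Finset.Nat.sum_antidiagonal_succ, hone, zero_mul, zero_add] at h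
  rw [mul_comm (monicLSeries χ), PowerSeries.coeff_mul, PowerSeries.coeff_derivative,
    monicLSeries]
  simp only [PowerSeries.coeff_mk]
  rw [← h]
  push_cast
  ring

theorem sum_polynomialVonMangoldt_mul_eq_neg_rootPowerSum [IsDomain R] {χ : F[X] → R}
    (hχ : ∀ f g : F[X], f.Monic → g.Monic → χ (f * g) = χ f * χ g) {p : R[X]} (hp : p.Monic)
    (hs : p.Splits) (hL : monicLSeries χ = p.reverse) {n : ℕ} (hn : n ≠ 0) :
    ∑ f ∈ monicsOfDegree F n, polynomialVonMangoldt f * χ f = -rootPowerSum n p := by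
  obtain ⟨k, rfl⟩ := Nat.exists_eq_succ_of_ne_zero hn
  have hL0 : monicLSeries χ ≠ 0 := by
    rw [hL, Ne, Polynomial.coe_eq_zero_iff, reverse_eq_zero]
    exact hp.ne_zero
  have h := derivative_monicLSeries hχ
  rw [hL, derivative_reverse_eq_mul_rootPowerSum hp hs, ← hL] at h
  simpa using (congrArg (PowerSeries.coeff k) (mul_left_cancel₀ hL0 h)).symm

end LSeries

section TruncLog

/-- The logarithm of the unit `1 + x t + y t² + z t³` of `𝔽₃[t]/(t⁴)`: an isomorphism from the
group of these units to `ℤ/9 × ℤ/3`. -/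
def truncLog (x y z : ZMod 3) : ZMod 9 × ZMod 3 :=
  (x.valMinAbs + 3 * (z - x * y).val, y + x ^ 2)

theorem truncLog_add_truncLog : ∀ x y z x' y' z' : ZMod 3,
    truncLog x y z + truncLog x' y' z' =
      truncLog (x + x') (y + x * x' + y') (z + y * x' + x * y' + z') := by
  decide +kernel

theorem truncLog_bijective :
    Function.Bijective fun c : ZMod 3 × ZMod 3 × ZMod 3 => truncLog c.2.2 c.2.1 c.1 :=
  (Fintype.bijective_iff_injective_and_card _).mpr ⟨by decide +kernel, rfl⟩

theorem truncLog_eq_zero_iff : ∀ {x y z : ZMod 3}, truncLog x y z = 0 ↔ x = 0 ∧ y = 0 ∧ z = 0 := by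
  decide +kernel

/-- The logarithm of the reversal `1 + c₁ t + c₂ t² + c₃ t³ + ⋯` of a monic polynomial,
modulo `t⁴`. -/
noncomputable def reverseLog (f : (ZMod 3)[X]) : ZMod 9 × ZMod 3 :=
  truncLog (f.reverse.coeff 1) (f.reverse.coeff 2) (f.reverse.coeff 3)

theorem reverseLog_mul {f g : (ZMod 3)[X]} (hf : f.Monic) (hg : g.Monic) :
    reverseLog (f * g) = reverseLog f + reverseLog g := by
  have hf0 : f.reverse.coeff 0 = 1 := (coeff_zero_reverse f).trans hf
  have hg0 : g.reverse.coeff 0 = 1 := (coeff_zero_reverse g).trans hg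
  have hone : (f * g).reverse.coeff 1 = f.reverse.coeff 1 + g.reverse.coeff 1 := by
    rw [reverse_mul_of_domain, coeff_mul, Finset.Nat.sum_antidiagonal_eq_sum_range_succ_mk]
    simp only [Finset.sum_range_succ, Finset.sum_range_zero, hf0, hg0, Nat.reduceSub]
    ring
  have htwo : (f * g).reverse.coeff 2 =
      f.reverse.coeff 2 + f.reverse.coeff 1 * g.reverse.coeff 1 + g.reverse.coeff 2 := by
    rw [reverse_mul_of_domain, coeff_mul, Finset.Nat.sum_antidiagonal_eq_sum_range_succ_mk]
    simp only [Finset.sum_range_succ, Finset.sum_range_zero, hf0, hg0, Nat.reduceSub]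
    ring
  have hthree : (f * g).reverse.coeff 3 = f.reverse.coeff 3 +
      f.reverse.coeff 2 * g.reverse.coeff 1 + f.reverse.coeff 1 * g.reverse.coeff 2 +
        g.reverse.coeff 3 := by
    rw [reverse_mul_of_domain, coeff_mul, Finset.Nat.sum_antidiagonal_eq_sum_range_succ_mk]
    simp only [Finset.sum_range_succ, Finset.sum_range_zero, hf0, hg0, Nat.reduceSub]
    ring
  rw [reverseLog, hone, htwo, hthree, ← truncLog_add_truncLog]
  rfl

section Sums

variable {M : Type*} [AddCommMonoid M] (φ : ZMod 9 × ZMod 3 → M)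

theorem sum_monicsOfDegree_zero_reverseLog :
    ∑ f ∈ monicsOfDegree (ZMod 3) 0, φ (reverseLog f) = φ 0 := by
  rw [sum_monicsOfDegree_zero, ← C_1, reverseLog, reverse_C]
  simp [coeff_one, truncLog_eq_zero_iff.mpr]

theorem sum_monicsOfDegree_one_reverseLog :
    ∑ f ∈ monicsOfDegree (ZMod 3) 1, φ (reverseLog f) = ∑ x, φ (truncLog x 0 0) := by
  simp only [sum_monicsOfDegree_succ, sum_monicsOfDegree_zero, reverseLog, reverse_linear]
  simp [coeff_one]

theorem sum_monicsOfDegree_two_reverseLog :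
    ∑ f ∈ monicsOfDegree (ZMod 3) 2, φ (reverseLog f) = ∑ y, ∑ x, φ (truncLog x y 0) := by
  simp only [sum_monicsOfDegree_succ, sum_monicsOfDegree_zero, reverseLog, reverse_quadratic]
  simp [coeff_one, coeff_X_pow]

theorem sum_monicsOfDegree_three_reverseLog :
    ∑ f ∈ monicsOfDegree (ZMod 3) 3, φ (reverseLog f) = ∑ v, φ v := by
  simp only [sum_monicsOfDegree_succ, sum_monicsOfDegree_zero, reverseLog, reverse_cubic]
  simp [coeff_one, coeff_X_pow, ← truncLog_bijective.sum_comp φ, Fintype.sum_prod_type]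

theorem sum_monicsOfDegree_succ_reverseLog {n : ℕ} (hn : 3 ≤ n) :
    ∑ f ∈ monicsOfDegree (ZMod 3) (n + 1), φ (reverseLog f) =
      3 • ∑ f ∈ monicsOfDegree (ZMod 3) n, φ (reverseLog f) := by
  have h : ∀ f ∈ monicsOfDegree (ZMod 3) n, ∀ c, reverseLog (f * X + C c) = reverseLog f := by
    intro f hf c
    obtain ⟨hmonic, rfl⟩ := mem_monicsOfDegree.mp hf
    simp only [reverseLog, reverse_mul_X_add_C hmonic.ne_zero, coeff_add, coeff_C_mul_X_pow]
    simp (disch := omega) only [if_neg, add_zero]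
  rw [sum_monicsOfDegree_succ, Finset.sum_congr rfl fun c _ => Finset.sum_congr rfl fun f hf => by
    rw [h f hf c], Finset.sum_const]
  rfl

end Sums

variable {R : Type*} [CommRing R] [IsDomain R]

theorem sum_monicsOfDegree_addChar_reverseLog_eq_zero {θ : AddChar (ZMod 9 × ZMod 3) R} (hθ : θ ≠ 1)
    {n : ℕ} (hn : 3 ≤ n) : ∑ f ∈ monicsOfDegree (ZMod 3) n, θ (reverseLog f) = 0 := by
  induction n, hn using Nat.le_induction with
  | base =>
    rw [sum_monicsOfDegree_three_reverseLog]
    exact (AddChar.sum_eq_ite θ).trans (if_neg hθ)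
  | succ n hn ih => rw [sum_monicsOfDegree_succ_reverseLog _ hn, ih, smul_zero]

end TruncLog

section Quadratic

/-- The value at `x` of the monic quadratic whose reverse is the L-series of the character of
`ℤ/9 × ℤ/3` that takes `(1, 0)` to `z` and `(0, 1)` to `w`, where `z ^ 9 = 1` and `w ^ 3 = 1`. -/
def quadraticL {S : Type*} [CommRing S] (x z w : S) : S :=
  x ^ 2 + (1 + w * (z + z ^ 8)) * x +
    (1 + w + w ^ 2 + w * (z + z ^ 8) + w ^ 2 * (z ^ 2 + z ^ 7) + (z ^ 4 + z ^ 5))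

variable {R : Type*} [CommRing R]

theorem quadraticL_X (z w : R) :
    quadraticL X (C z) (C w) = (1 * X + C (1 + w * (z + z ^ 8))) * X +
      C (1 + w + w ^ 2 + w * (z + z ^ 8) + w ^ 2 * (z ^ 2 + z ^ 7) + (z ^ 4 + z ^ 5)) := by
  simp only [quadraticL, C_add, C_mul, C_pow, C_1]
  ring

theorem monic_quadraticL_X (z w : R) : (quadraticL X (C z) (C w)).Monic := by
  nontriviality R
  rw [quadraticL_X]
  monicity!

@[to_additive]
theorem prod_zmod_three {M : Type*} [CommMonoid M] (φ : ZMod 3 → M) :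
    ∏ x, φ x = φ 0 * φ 1 * φ 2 :=
  Fin.prod_univ_three φ

section Character

variable (θ : AddChar (ZMod 9 × ZMod 3) R)

theorem addChar_truncLog {x y z : ZMod 3} {a b : ℕ}
    (h : truncLog x y z = a • (1, 0) + b • (0, 1)) :
    θ (truncLog x y z) = θ (1, 0) ^ a * θ (0, 1) ^ b := by
  rw [h, AddChar.map_add_eq_mul, AddChar.map_nsmul_eq_pow, AddChar.map_nsmul_eq_pow]

theorem sum_addChar_truncLog_linear :
    ∑ x, θ (truncLog x 0 0) = 1 + θ (0, 1) * (θ (1, 0) + θ (1, 0) ^ 8) := by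
  rw [sum_zmod_three, addChar_truncLog θ (a := 0) (b := 0) (by decide),
    addChar_truncLog θ (a := 1) (b := 1) (by decide),
    addChar_truncLog θ (a := 8) (b := 1) (by decide)]
  ring

theorem sum_addChar_truncLog_quadratic :
    ∑ y, ∑ x, θ (truncLog x y 0) = 1 + θ (0, 1) + θ (0, 1) ^ 2 +
      θ (0, 1) * (θ (1, 0) + θ (1, 0) ^ 8) + θ (0, 1) ^ 2 * (θ (1, 0) ^ 2 + θ (1, 0) ^ 7) +
      (θ (1, 0) ^ 4 + θ (1, 0) ^ 5) := by
  have hone : ∑ x, θ (truncLog x 1 0) =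
      θ (0, 1) + θ (1, 0) ^ 7 * θ (0, 1) ^ 2 + θ (1, 0) ^ 2 * θ (0, 1) ^ 2 := by
    rw [sum_zmod_three, addChar_truncLog θ (a := 0) (b := 1) (by decide),
      addChar_truncLog θ (a := 7) (b := 2) (by decide),
      addChar_truncLog θ (a := 2) (b := 2) (by decide)]
    ring
  have htwo : ∑ x, θ (truncLog x 2 0) = θ (0, 1) ^ 2 + θ (1, 0) ^ 4 + θ (1, 0) ^ 5 := by
    rw [sum_zmod_three, addChar_truncLog θ (a := 0) (b := 2) (by decide),
      addChar_truncLog θ (a := 4) (b := 0) (by decide),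
      addChar_truncLog θ (a := 5) (b := 0) (by decide)]
    ring
  rw [sum_zmod_three, sum_addChar_truncLog_linear, hone, htwo]
  ring

variable [IsDomain R]

theorem monicLSeries_eq_reverse_quadraticL {θ : AddChar (ZMod 9 × ZMod 3) R} (hθ : θ ≠ 1) :
    monicLSeries (fun f : (ZMod 3)[X] => θ (reverseLog f)) =
      (quadraticL X (C (θ (1, 0))) (C (θ (0, 1)))).reverse := by
  ext n
  rw [monicLSeries, PowerSeries.coeff_mk, coeff_coe, quadraticL_X, reverse_quadratic]
  simp only [coeff_add, coeff_one, coeff_C_mul_X, coeff_C_mul_X_pow]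
  obtain rfl | rfl | rfl | hn : n = 0 ∨ n = 1 ∨ n = 2 ∨ 3 ≤ n := by omega
  · simp [sum_monicsOfDegree_zero_reverseLog]
  · simp [sum_monicsOfDegree_one_reverseLog, sum_addChar_truncLog_linear]
  · simp [sum_monicsOfDegree_two_reverseLog, sum_addChar_truncLog_quadratic]
  · rw [sum_monicsOfDegree_addChar_reverseLog_eq_zero hθ hn]
    simp (disch := omega) only [if_neg, add_zero]

end Character

end Quadratic

section RootsOfUnity

variable {S : Type*} [CommRing S] (x : S)

theorem quadraticL_one_mul_quadraticL_one_sq {w : S} (hw : w ^ 2 + w + 1 = 0) :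
    quadraticL x 1 w * quadraticL x 1 (w ^ 2) = x ^ 2 * e23.eval₂ (Int.castRingHom S) x := by
  simp only [quadraticL, e23, eval₂_add, eval₂_pow, eval₂_ofNat, eval₂_X]
  grind

theorem prod_quadraticL_of_cube {w : S} (hw : w ^ 2 + w + 1 = 0) :
    quadraticL x w 1 * quadraticL x w w * quadraticL x w (w ^ 2) =
      x ^ 4 * e22.eval₂ (Int.castRingHom S) x := by
  have h0 : quadraticL x w 1 = x ^ 2 := by
    simp only [quadraticL]
    grind
  have h1 : quadraticL x w w * quadraticL x w (w ^ 2) =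
      x ^ 2 * e22.eval₂ (Int.castRingHom S) x := by
    simp only [quadraticL, e22, eval₂_add, eval₂_mul, eval₂_pow, eval₂_ofNat, eval₂_X]
    grind
  rw [h0, mul_assoc, h1]
  ring

theorem quadraticL_eq_of_mul_eq_one {z z' : S} (hz : z ^ 9 = 1) (h : z * z' = 1) (w : S) :
    quadraticL x z w = quadraticL x z' w := by
  simp only [quadraticL]
  grind

-- For a primitive ninth root of unity `z` and `w` a power of `z ^ 3`, `quadraticL x z w` is
-- `a + b * z + c * z ^ 8` with `a`, `b`, `c` unchanged under `z ↦ z ^ 4`. This map multiplies `z`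
-- by `z ^ 3` and `z ^ 8` by `z ^ 6`, so the product over `z`, `z ^ 4`, `z ^ 7` is a circulant
-- determinant.
theorem circulant_eigenvalues_mul {w : S} (hw : w ^ 2 + w + 1 = 0) (a b c : S) :
    (a + b + c) * (a + w * b + w ^ 2 * c) * (a + w ^ 2 * b + w * c) =
      a ^ 3 + b ^ 3 + c ^ 3 - 3 * a * b * c := by
  grind

section NinthRoot

variable {z : S}

theorem prod_quadraticL_ninth_one (hz : z ^ 6 + z ^ 3 + 1 = 0) :
    quadraticL x z 1 * quadraticL x (z ^ 4) 1 * quadraticL x (z ^ 7) 1 =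
      e6.eval₂ (Int.castRingHom S) x := by
  have h1 : quadraticL x z 1 = x ^ 2 + x + 3 + x * z + x * z ^ 8 := by
    simp only [quadraticL]
    grind
  have h4 : quadraticL x (z ^ 4) 1 =
      x ^ 2 + x + 3 + z ^ 3 * (x * z) + (z ^ 3) ^ 2 * (x * z ^ 8) := by
    simp only [quadraticL]
    grind
  have h7 : quadraticL x (z ^ 7) 1 =
      x ^ 2 + x + 3 + (z ^ 3) ^ 2 * (x * z) + z ^ 3 * (x * z ^ 8) := by
    simp only [quadraticL]
    grind
  rw [h1, h4, h7, circulant_eigenvalues_mul (by linear_combination hz)]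
  simp only [e6, eval₂_add, eval₂_mul, eval₂_pow, eval₂_ofNat, eval₂_X]
  grind

theorem prod_quadraticL_ninth_cube (hz : z ^ 6 + z ^ 3 + 1 = 0) :
    quadraticL x z (z ^ 3) * quadraticL x (z ^ 4) (z ^ 3) * quadraticL x (z ^ 7) (z ^ 3) =
      (x ^ 2 + x) ^ 3 + z ^ 3 * (x + 3) ^ 3 +
        z ^ 6 * (x ^ 3 - 3 * (x ^ 2 + x) * x * (x + 3)) := by
  have h1 : quadraticL x z (z ^ 3) =
      x ^ 2 + x + z ^ 3 * (x + 3) * z + z ^ 3 * x * z ^ 8 := by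
    simp only [quadraticL]
    grind
  have h4 : quadraticL x (z ^ 4) (z ^ 3) =
      x ^ 2 + x + z ^ 3 * (z ^ 3 * (x + 3) * z) + (z ^ 3) ^ 2 * (z ^ 3 * x * z ^ 8) := by
    simp only [quadraticL]
    grind
  have h7 : quadraticL x (z ^ 7) (z ^ 3) =
      x ^ 2 + x + (z ^ 3) ^ 2 * (z ^ 3 * (x + 3) * z) + z ^ 3 * (z ^ 3 * x * z ^ 8) := by
    simp only [quadraticL]
    grind
  rw [h1, h4, h7, circulant_eigenvalues_mul (by linear_combination hz)]
  grind

theorem prod_quadraticL_ninth_sixth (hz : z ^ 6 + z ^ 3 + 1 = 0) :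
    quadraticL x z (z ^ 6) * quadraticL x (z ^ 4) (z ^ 6) * quadraticL x (z ^ 7) (z ^ 6) =
      (x ^ 2 + x) ^ 3 + z ^ 6 * (x + 3) ^ 3 +
        z ^ 3 * (x ^ 3 - 3 * (x ^ 2 + x) * x * (x + 3)) := by
  have h9 : z ^ 9 = 1 := by linear_combination (z ^ 3 - 1) * hz
  have hinv : ∀ k, z ^ k * (z ^ 8) ^ k = 1 := fun k => by
    rw [← mul_pow, ← pow_succ', h9, one_pow]
  have hsymm : ∀ k w, quadraticL x ((z ^ 8) ^ k) w = quadraticL x (z ^ k) w := fun k w =>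
    (quadraticL_eq_of_mul_eq_one x (by rw [← pow_mul, mul_comm, pow_mul, h9, one_pow])
      (hinv k) w).symm
  have hsymm1 := hsymm 1
  rw [pow_one, pow_one] at hsymm1
  have h := prod_quadraticL_ninth_cube x (z := z ^ 8) (by grind)
  rwa [hsymm1, hsymm, hsymm, show (z ^ 8) ^ 3 = z ^ 6 by grind,
    show (z ^ 8) ^ 6 = z ^ 3 by grind] at h

theorem prod_quadraticL_primitive (hz : z ^ 6 + z ^ 3 + 1 = 0) :
    (∏ j : ZMod 3, quadraticL x z (z ^ (3 * j.val))) *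
        (∏ j : ZMod 3, quadraticL x (z ^ 4) (z ^ (3 * j.val))) *
        ∏ j : ZMod 3, quadraticL x (z ^ 7) (z ^ (3 * j.val)) =
      e6.eval₂ (Int.castRingHom S) x * e12.eval₂ (Int.castRingHom S) x := by
  have h12 : e12.eval₂ (Int.castRingHom S) x = ((x ^ 2 + x) ^ 3 + z ^ 3 * (x + 3) ^ 3 +
        z ^ 6 * (x ^ 3 - 3 * (x ^ 2 + x) * x * (x + 3))) *
      ((x ^ 2 + x) ^ 3 + z ^ 6 * (x + 3) ^ 3 +
        z ^ 3 * (x ^ 3 - 3 * (x ^ 2 + x) * x * (x + 3))) := by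
    simp only [e12, eval₂_add, eval₂_mul, eval₂_pow, eval₂_ofNat, eval₂_X]
    grind
  rw [← prod_quadraticL_ninth_one x hz, h12, ← prod_quadraticL_ninth_cube x hz,
    ← prod_quadraticL_ninth_sixth x hz]
  have hval : (0 : ZMod 3).val = 0 ∧ (1 : ZMod 3).val = 1 ∧ (2 : ZMod 3).val = 2 := by decide
  simp only [prod_zmod_three, hval, mul_zero, pow_zero, mul_one, Nat.reduceMul]
  ring

theorem prod_erase_zero_zmod_nine_prod_zmod_three {M : Type*} [CommMonoid M]
    (φ : ZMod 9 × ZMod 3 → M) :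
    ∏ r ∈ Finset.univ.erase 0, φ r =
      (φ (0, 1) * φ (0, 2)) * ((∏ j, φ (3, j)) * ∏ j, φ (6, j)) *
        ((∏ j, φ (1, j)) * (∏ j, φ (4, j)) * ∏ j, φ (7, j)) *
          ((∏ j, φ (8, j)) * (∏ j, φ (5, j)) * ∏ j, φ (2, j)) := by
  have hunion : (Finset.univ.erase 0 : Finset (ZMod 9 × ZMod 3)) =
      ({0} : Finset (ZMod 9)) ×ˢ ({1, 2} : Finset (ZMod 3)) ∪ {3, 6} ×ˢ Finset.univ ∪
        {1, 4, 7} ×ˢ Finset.univ ∪ {8, 5, 2} ×ˢ Finset.univ := by decide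
  rw [hunion, Finset.prod_union (by decide), Finset.prod_union (by decide),
    Finset.prod_union (by decide)]
  simp only [Finset.prod_product]
  rw [Finset.prod_singleton, Finset.prod_pair (by decide), Finset.prod_pair (by decide),
    Finset.prod_insert (by decide), Finset.prod_pair (by decide), Finset.prod_insert (by decide),
    Finset.prod_pair (by decide)]
  simp only [mul_assoc]

theorem prod_quadraticL_erase_zero (hz : z ^ 6 + z ^ 3 + 1 = 0) :
    ∏ r ∈ (Finset.univ : Finset (ZMod 9 × ZMod 3)).erase 0,
        quadraticL x (z ^ r.1.val) (z ^ (3 * r.2.val)) =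
      x ^ 10 * (e22.eval₂ (Int.castRingHom S) x ^ 2 * e23.eval₂ (Int.castRingHom S) x *
        e6.eval₂ (Int.castRingHom S) x ^ 2 * e12.eval₂ (Int.castRingHom S) x ^ 2) := by
  have hω : (z ^ 3) ^ 2 + z ^ 3 + 1 = 0 := by linear_combination hz
  have h9 : z ^ 9 = 1 := by linear_combination (z ^ 3 - 1) * hz
  have hsymm : ∀ i j, i + j = 9 → ∀ w, quadraticL x (z ^ i) w = quadraticL x (z ^ j) w :=
    fun i j hij w => quadraticL_eq_of_mul_eq_one x
      (by rw [← pow_mul, mul_comm, pow_mul, h9, one_pow]) (by rw [← pow_add, hij, h9]) w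
  have hval3 : (0 : ZMod 3).val = 0 ∧ (1 : ZMod 3).val = 1 ∧ (2 : ZMod 3).val = 2 := by decide
  have hval9 : (0 : ZMod 9).val = 0 ∧ (1 : ZMod 9).val = 1 ∧ (2 : ZMod 9).val = 2 ∧
      (3 : ZMod 9).val = 3 ∧ (4 : ZMod 9).val = 4 ∧ (5 : ZMod 9).val = 5 ∧ (6 : ZMod 9).val = 6 ∧
      (7 : ZMod 9).val = 7 ∧ (8 : ZMod 9).val = 8 := by decide
  have hzero := quadraticL_one_mul_quadraticL_one_sq x hω
  have hcube : ∏ j : ZMod 3, quadraticL x (z ^ 3) (z ^ (3 * j.val)) =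
      x ^ 4 * e22.eval₂ (Int.castRingHom S) x := by
    rw [← prod_quadraticL_of_cube x hω, prod_zmod_three]
    simp only [hval3, pow_mul, pow_zero, pow_one]
  rw [prod_erase_zero_zmod_nine_prod_zmod_three]
  simp only [hval9, pow_one, hsymm 6 3 rfl, hsymm 8 1 rfl, hsymm 5 4 rfl, hsymm 2 7 rfl]
  rw [prod_quadraticL_primitive x hz, hcube]
  simp only [hval3, pow_mul, pow_zero, pow_one, hzero]
  ring

end NinthRoot

end RootsOfUnity

section Counting

variable {R : Type*}

theorem card_mul_card_eq_sum_addChar [CommRing R] [IsDomain R] {A : Type*} [CommRing A] [Fintype A]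
    {ψ : AddChar A R} (hψ : ψ.IsPrimitive) {ι : Type*} [Fintype ι] (g : ι → A) :
    (Fintype.card A : R) * Nat.card {i // g i = 0} = ∑ r, ∑ i, ψ (r * g i) := by
  classical
  rw [Finset.sum_comm, Nat.card_eq_fintype_card, Fintype.card_subtype]
  simp only [AddChar.sum_mulShift _ hψ]
  rw [← Nat.cast_sum, ← Finset.sum_filter, Finset.sum_const, smul_eq_mul, Nat.cast_mul, mul_comm]

-- With the product ring structure on `ℤ/9 × ℤ/3`, all 27 characters are shifts of a single
-- primitive one.
theorem exists_isPrimitive_addChar [CommMonoid R] {ζ : R} (hζ : IsPrimitiveRoot ζ 9) :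
    ∃ ψ : AddChar (ZMod 9 × ZMod 3) R,
      ψ.IsPrimitive ∧ ∀ a b, ψ (a, b) = ζ ^ a.val * ζ ^ (3 * b.val) := by
  have hω : (ζ ^ 3) ^ 3 = 1 := by rw [← pow_mul, hζ.pow_eq_one]
  let ψ := (AddChar.zmodChar 9 hζ.pow_eq_one).compAddMonoidHom (AddMonoidHom.fst _ (ZMod 3)) *
    (AddChar.zmodChar 3 hω).compAddMonoidHom (AddMonoidHom.snd (ZMod 9) _)
  have hψ : ∀ a b, ψ (a, b) = ζ ^ a.val * ζ ^ (3 * b.val) := fun a b => by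
    rw [pow_mul]
    rfl
  refine ⟨ψ, fun r hr h => hr ?_, hψ⟩
  have hfst : ψ (r * (1, 0)) = 1 := by rw [← AddChar.mulShift_apply, h, AddChar.one_apply]
  have hsnd : ψ (r * (0, 1)) = 1 := by rw [← AddChar.mulShift_apply, h, AddChar.one_apply]
  simp only [Prod.mul_def, mul_one, mul_zero, hψ, ZMod.val_zero, pow_zero, one_mul] at hfst hsnd
  have hr1 := Nat.eq_zero_of_dvd_of_lt (hζ.dvd_of_pow_eq_one _ hfst) r.1.val_lt
  have hr2 := Nat.eq_zero_of_dvd_of_lt (hζ.dvd_of_pow_eq_one _ hsnd)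
    (by have := r.2.val_lt; omega)
  exact Prod.ext ((ZMod.val_eq_zero _).mp hr1) ((ZMod.val_eq_zero _).mp (by omega))

variable {K : Type*} [Field K] [Algebra (ZMod 3) K]

open Module (finrank)

theorem reverseLog_fieldCharpoly_eq_zero_iff [Finite K] {n : ℕ} (hn : finrank (ZMod 3) K = n)
    (h3 : 3 ≤ n) (a : K) :
    reverseLog (fieldCharpoly (ZMod 3) a) = 0 ↔
      traceFn 3 n 1 a = 0 ∧ traceFn 3 n 2 a = 0 ∧ traceFn 3 n 3 a = 0 := by
  have h : ∀ k ≤ 3, (fieldCharpoly (ZMod 3) a).reverse.coeff k = 0 ↔ traceFn 3 n k a = 0 := by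
    intro k hk
    rw [← map_eq_zero_iff _ (algebraMap (ZMod 3) K).injective,
      algebraMap_coeff_reverse_fieldCharpoly _ _ (by omega), ZMod.card, hn]
    simp
  rw [reverseLog, truncLog_eq_zero_iff, h 1 (by simp), h 2 (by simp), h 3 le_rfl]

variable [Fintype K] [Field R] [IsAlgClosed R]

theorem sum_addChar_reverseLog_fieldCharpoly {θ : AddChar (ZMod 9 × ZMod 3) R} (hθ : θ ≠ 1) :
    ∑ a : K, θ (reverseLog (fieldCharpoly (ZMod 3) a)) =
      -rootPowerSum (finrank (ZMod 3) K) (quadraticL X (C (θ (1, 0))) (C (θ (0, 1)))) := by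
  have hmul : ∀ f g : (ZMod 3)[X], f.Monic → g.Monic →
      θ (reverseLog (f * g)) = θ (reverseLog f) * θ (reverseLog g) := fun f g hf hg => by
    rw [reverseLog_mul hf hg, AddChar.map_add_eq_mul]
  rw [sum_fieldCharpoly (ZMod 3) fun f => θ (reverseLog f)]
  exact sum_polynomialVonMangoldt_mul_eq_neg_rootPowerSum hmul (monic_quadraticL_X _ _)
    (IsAlgClosed.splits _) (monicLSeries_eq_reverse_quadraticL hθ) Module.finrank_pos.ne'

theorem card_reverseLog_fieldCharpoly_eq_zero {ζ : R} (hζ : IsPrimitiveRoot ζ 9) :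
    27 * (Nat.card {a : K // reverseLog (fieldCharpoly (ZMod 3) a) = 0} : R) =
      Fintype.card K - rootPowerSum (finrank (ZMod 3) K)
        (∏ r ∈ (Finset.univ : Finset (ZMod 9 × ZMod 3)).erase 0,
          quadraticL X (C ζ ^ r.1.val) (C ζ ^ (3 * r.2.val))) := by
  obtain ⟨ψ, hψ, hψ_apply⟩ := exists_isPrimitive_addChar hζ
  have hr : ∀ r ≠ 0, ∑ a : K, ψ (r * reverseLog (fieldCharpoly (ZMod 3) a)) =
      -rootPowerSum (finrank (ZMod 3) K)
        (quadraticL X (C ζ ^ r.1.val) (C ζ ^ (3 * r.2.val))) := by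
    intro r hr
    have h := sum_addChar_reverseLog_fieldCharpoly (K := K) (hψ hr)
    simpa [AddChar.mulShift_apply, Prod.mul_def, hψ_apply] using h
  have hcard : (Fintype.card (ZMod 9 × ZMod 3) : R) = 27 := by
    rw [Fintype.card_prod, ZMod.card, ZMod.card]
    norm_num
  rw [← hcard, card_mul_card_eq_sum_addChar hψ, ← Finset.add_sum_erase _ _ (Finset.mem_univ 0),
    Finset.sum_congr rfl fun r h => hr r (Finset.ne_of_mem_erase h), Finset.sum_neg_distrib,
    rootPowerSum_prod, sub_eq_add_neg]
  · simp
  · simp only [← C_pow]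
    exact fun r _ => (monic_quadraticL_X _ _).ne_zero

theorem rho_eq_rootPowerSum (n : ℕ) (γ : ℤ[X]) :
    rho n γ = rootPowerSum n (γ.eval₂ (Int.castRingHom ℂ[X]) X) := by
  rw [rho, rootPowerSum, Polynomial.map, RingHom.ext_int (C.comp (Int.castRingHom ℂ))]

theorem rootPowerSum_prod_quadraticL {ζ : ℂ} (hζ : IsPrimitiveRoot ζ 9) {n : ℕ} (hn : n ≠ 0) :
    rootPowerSum n (∏ r ∈ (Finset.univ : Finset (ZMod 9 × ZMod 3)).erase 0,
        quadraticL X (C ζ ^ r.1.val) (C ζ ^ (3 * r.2.val))) =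
      2 * rho n e22 + rho n e23 + 2 * rho n e6 + 2 * rho n e12 := by
  have hζ9 : ζ ^ 6 + ζ ^ 3 + 1 = 0 := by
    have h := (hζ.pow (by norm_num) (show 9 = 3 * 3 from rfl)).geom_sum_eq_zero (by norm_num)
    simp only [Finset.sum_range_succ, Finset.sum_range_zero] at h
    linear_combination h
  have hz : (C ζ) ^ 6 + C ζ ^ 3 + 1 = 0 := by
    rw [← C_pow, ← C_pow, ← C_1, ← C_add, ← C_add, hζ9, C_0]
  have hne : ∏ r ∈ (Finset.univ : Finset (ZMod 9 × ZMod 3)).erase 0,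
      quadraticL X (C ζ ^ r.1.val) (C ζ ^ (3 * r.2.val)) ≠ 0 := by
    simp only [← C_pow]
    exact Finset.prod_ne_zero_iff.mpr fun r _ => (monic_quadraticL_X _ _).ne_zero
  rw [prod_quadraticL_erase_zero X hz] at hne ⊢
  have hne' := right_ne_zero_of_mul hne
  rw [rootPowerSum_mul n hne, rootPowerSum_mul n hne',
    rootPowerSum_mul n (left_ne_zero_of_mul hne'),
    rootPowerSum_mul n (left_ne_zero_of_mul (left_ne_zero_of_mul hne'))]
  simp only [rootPowerSum_pow, rootPowerSum_X hn, rho_eq_rootPowerSum]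
  norm_num

end Counting

theorem statement19 (n : ℕ) (hn : 3 ≤ n)
    (K : Type) [Field K] [Fintype K] (hK : Fintype.card K = 3 ^ n) :
    (Nat.card {a : K // traceFn 3 n 1 a = 0 ∧ traceFn 3 n 2 a = 0 ∧ traceFn 3 n 3 a = 0} : ℂ)
      = 3 ^ (n - 3) - (1 / 27) *
          (2 * rho n e22 + rho n e23 + 2 * rho n e6 + 2 * rho n e12) := by
  have : CharP K 3 := charP_of_card_eq_prime_pow hK
  let _ : Algebra (ZMod 3) K := ZMod.algebra K 3
  have hfinrank : Module.finrank (ZMod 3) K = n := by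
    have h := Module.card_eq_pow_finrank (K := ZMod 3) (V := K)
    rw [hK, ZMod.card] at h
    exact (Nat.pow_right_injective (by norm_num : 2 ≤ 3) h).symm
  have hζ : IsPrimitiveRoot (Complex.exp (2 * Real.pi * Complex.I / 9)) 9 := by
    exact_mod_cast Complex.isPrimitiveRoot_exp 9 (by norm_num)
  have hcount := card_reverseLog_fieldCharpoly_eq_zero (K := K) hζ
  rw [rootPowerSum_prod_quadraticL hζ Module.finrank_pos.ne', hfinrank, hK] at hcount
  simp only [reverseLog_fieldCharpoly_eq_zero_iff hfinrank hn] at hcount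
  obtain ⟨m, rfl⟩ := Nat.exists_eq_add_of_le' hn
  push_cast at hcount
  rw [Nat.add_sub_cancel]
  linear_combination hcount / 27
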